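/- For every 13-dimensional simplicial convex polytope P ⊂ ℝ¹³, the face numbers satisfy: f₆ = 8f₅ − 36f₄ + 120f₃ − 330f₂ + 792f₁ − 1716f₀ + 3432; f₇ = 27f₅ − 159f₄ + 585f₃ − 1683f₂ + 4125f₁ − 9009f₀ + 18018; f₈ = 50f₅ − 325f₄ + 1252f₃ − 3685f₂ + 9130f₁ − 20020f₀ + 40040; f₉ = 55f₅ − 374f₄ + 1474f₃ − 4389f₂ + 10934f₁ − 24024f₀ + 48048; f₁₀ = 36f₅ − 250f₄ + 996f₃ − 2982f₂ + 7448f₁ − 16380f₀ + 32760; f₁₁ = 13f₅ − 91f₄ + 364f₃ − 1092f₂ + 2730f₁ − 6006f₀ + 12012; f₁₂ = 2f₅ − 14f₄ + 56f₃ − 168f₂ + 420f₁ − 924f₀ + 1848. -/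

import Mathlib

open scoped BigOperators

noncomputable section

/-- Dimension of a subset of a real vector space: the rank of its vector span. -/
def sdim {n : ℕ} (s : Set (EuclideanSpace ℝ (Fin n))) : ℕ :=
  Module.finrank ℝ (vectorSpan ℝ s)

/-- An `n`-dimensional convex polytope in `ℝⁿ`: the convex hull of a finite set of
points, with nonempty interior. -/
structure ConvexPolytope (n : ℕ) where
  verts : Finset (EuclideanSpace ℝ (Fin n))
  nonempty_int :
    (interior (convexHull ℝ (verts : Set (EuclideanSpace ℝ (Fin n))))).Nonempty

/-- `F` is an `m`-simplex: the convex hull of `m` affinely independent points. -/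
def IsSimplexSet {n : ℕ} (F : Set (EuclideanSpace ℝ (Fin n))) (m : ℕ) : Prop :=
  ∃ s : Finset (EuclideanSpace ℝ (Fin n)),
    s.card = m ∧
    AffineIndependent ℝ (fun v : s => (v : EuclideanSpace ℝ (Fin n))) ∧
    F = convexHull ℝ (s : Set (EuclideanSpace ℝ (Fin n)))

namespace ConvexPolytope

variable {n : ℕ} (P : ConvexPolytope n)

/-- The underlying set of the polytope. -/
def carrier : Set (EuclideanSpace ℝ (Fin n)) :=
  convexHull ℝ (P.verts : Set (EuclideanSpace ℝ (Fin n)))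

/-- The `k`-faces of `P`: the `k`-dimensional (nonempty) exposed faces of `P`. -/
def faces (k : ℕ) : Set (Set (EuclideanSpace ℝ (Fin n))) :=
  {F | IsExposed ℝ P.carrier F ∧ F.Nonempty ∧ sdim F = k}

/-- `f_k(P)`: the number of `k`-faces of `P` (for `0 ≤ k ≤ n`). -/
def fcount (k : ℕ) : ℕ := (P.faces k).ncard

/-- The face numbers with integer index and the conventions `f₋₁ = fₙ = 1`. -/
def fZ (k : ℤ) : ℕ :=
  if k = -1 ∨ k = (n : ℤ) then 1
  else if 0 ≤ k ∧ k < (n : ℤ) then P.fcount k.toNat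
  else 0

/-- `P` is simplicial: every facet is an `(n-1)`-simplex, i.e. the convex hull of `n`
affinely independent points. -/
def IsSimplicial : Prop :=
  ∀ F ∈ P.faces (n - 1), IsSimplexSet F n

/-- `P` is simple at edges: every `1`-dimensional face of `P` is contained in exactly
`n - 1` facets. -/
def SimpleAtEdges : Prop :=
  ∀ L ∈ P.faces 1, {F ∈ P.faces (n - 1) | L ⊆ F}.ncard = n - 1

end ConvexPolytope

/-- The `l`-faces of a face `F`: the `l`-dimensional (nonempty) exposed faces of `F`. -/
def subfaces {n : ℕ} (F : Set (EuclideanSpace ℝ (Fin n))) (l : ℕ) :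
    Set (Set (EuclideanSpace ℝ (Fin n))) :=
  {G | IsExposed ℝ F G ∧ G.Nonempty ∧ sdim G = l}

/-!
Move an interior point of the simplicial polytope to the origin and choose a vector `c` outside the
proper subspaces spanned by vertices. The cones over the facets tile the space, and each facet `T`
provides coordinates with respect to its vertices. Let `R_c(T)` be the set of vertices of `T` at
which `c` has a negative coordinate. Leaving the barycentre of a proper face `S` in direction `c`,
one enters the cone over exactly one facet `T`, and it is characterised by `R_c(T) ⊆ S ⊆ T`. So
these intervals partition the boundary complex, whence its `f`-polynomial is
`G(x) = ∑_T x ^ |R_c(T)| * (1 + x) ^ (n - |R_c(T)|)`. Replacing `c` by `-c` complements every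
`R_c(T)` in `T`, and comparing the two expressions gives `G(-1 - x) = (-1) ^ n * G(x)`. In dimension
`13` the values of this identity at `x = 0, …, 6` are seven linear equations that determine
`f₆, …, f₁₂` from `f₀, …, f₅`.
-/

section Configuration

open Filter Topology

variable {ι E : Type*} [AddCommGroup E] [Module ℝ E]
  {V S T : Finset ι} {w : ι → E} {κ : ι → Module.Dual ℝ E} {a b : Module.Dual ℝ E} {c : E}

/-- The functional `b` is at most `1` on the points `w i`, `i ∈ V`. When the origin is interior to
their convex hull, these `b` form the polar polytope, and every proper face lies on a hyperplane
`b = 1` for one of them. -/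
def IsSupporting (V : Finset ι) (w : ι → E) (b : Module.Dual ℝ E) : Prop :=
  ∀ i ∈ V, b (w i) ≤ 1

/-- The indices of the points of the configuration that lie on the hyperplane `b = 1`. -/
def contactSet (V : Finset ι) (w : ι → E) (b : Module.Dual ℝ E) : Finset ι :=
  {i ∈ V | b (w i) = 1}

/-- The index sets of points that lie together on a supporting hyperplane. All subsets of a contact
set are admitted; in the simplicial case these are exactly the vertex sets of the proper faces,
including the empty face. -/
def IsBoundaryFace (V : Finset ι) (w : ι → E) (S : Finset ι) : Prop :=
  ∃ b, IsSupporting V w b ∧ S ⊆ contactSet V w b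

/-- The vertex sets of the facets: the contact sets of supporting functionals that span. -/
def IsBoundaryFacet (V : Finset ι) (w : ι → E) (T : Finset ι) : Prop :=
  ∃ a, IsSupporting V w a ∧ T = contactSet V w a ∧ Submodule.span ℝ (w '' T) = ⊤

/-- The cones over the faces of the configuration cover the space, and the cones over its facets
are simplicial. This is what is used of a simplicial polytope with the origin in its interior. -/
structure IsCompleteSimplicial (V : Finset ι) (w : ι → E) : Prop where
  exists_mem_cone : ∀ x, ∃ S, IsBoundaryFace V w S ∧
    ∃ μ : ι → ℝ, (∀ i ∈ S, 0 ≤ μ i) ∧ ∑ i ∈ S, μ i • w i = x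
  linearIndepOn : ∀ T, IsBoundaryFacet V w T → LinearIndepOn ℝ w (T : Set ι)

open Classical in
/-- The finite set of all boundary faces, including the empty one. -/
def boundaryFaces (V : Finset ι) (w : ι → E) : Finset (Finset ι) :=
  {S ∈ V.powerset | IsBoundaryFace V w S}

open Classical in
/-- The finite set of all boundary facets. -/
def boundaryFacets (V : Finset ι) (w : ι → E) : Finset (Finset ι) :=
  {T ∈ V.powerset | IsBoundaryFacet V w T}

lemma mem_contactSet {i : ι} : i ∈ contactSet V w b ↔ i ∈ V ∧ b (w i) = 1 :=
  Finset.mem_filter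

lemma contactSet_subset : contactSet V w b ⊆ V :=
  Finset.filter_subset _ _

lemma IsBoundaryFace.subset (hS : IsBoundaryFace V w S) : S ⊆ V := by
  obtain ⟨b, -, hSb⟩ := hS
  exact hSb.trans contactSet_subset

lemma IsBoundaryFace.mono (hT : IsBoundaryFace V w T) (hST : S ⊆ T) : IsBoundaryFace V w S := by
  obtain ⟨b, hb, hTb⟩ := hT
  exact ⟨b, hb, hST.trans hTb⟩

lemma IsBoundaryFacet.isBoundaryFace (hT : IsBoundaryFacet V w T) : IsBoundaryFace V w T := by
  obtain ⟨a, ha, hTa, -⟩ := hT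
  exact ⟨a, ha, hTa.subset⟩

lemma isBoundaryFace_empty : IsBoundaryFace V w ∅ :=
  ⟨0, by simp [IsSupporting], Finset.empty_subset _⟩

lemma mem_boundaryFaces : S ∈ boundaryFaces V w ↔ IsBoundaryFace V w S := by
  simpa [boundaryFaces] using IsBoundaryFace.subset

lemma mem_boundaryFacets : T ∈ boundaryFacets V w ↔ IsBoundaryFacet V w T := by
  simpa [boundaryFacets] using fun hT : IsBoundaryFacet V w T ↦ hT.isBoundaryFace.subset

/-! ### Maximality of the functional of a face on the cone over that face -/

lemma apply_le_apply_of_subset_contactSet {μ : ι → ℝ} (hT : T ⊆ contactSet V w a)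
    (hb : IsSupporting V w b) (hμ : ∀ i ∈ T, 0 ≤ μ i) :
    b (∑ i ∈ T, μ i • w i) ≤ a (∑ i ∈ T, μ i • w i) := by
  simp only [map_sum, map_smul, smul_eq_mul]
  refine Finset.sum_le_sum fun i hi ↦ mul_le_mul_of_nonneg_left ?_ (hμ i hi)
  obtain ⟨hiV, hai⟩ := mem_contactSet.1 (hT hi)
  exact (hb i hiV).trans_eq hai.symm

lemma subset_contactSet_of_apply_le {μ : ι → ℝ} (hT : T ⊆ contactSet V w a)
    (hb : IsSupporting V w b) (hμ : ∀ i ∈ T, 0 < μ i)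
    (hab : a (∑ i ∈ T, μ i • w i) ≤ b (∑ i ∈ T, μ i • w i)) : T ⊆ contactSet V w b := by
  have hterm : ∀ i ∈ T, μ i * b (w i) ≤ μ i * a (w i) := fun i hi ↦ by
    obtain ⟨hiV, hai⟩ := mem_contactSet.1 (hT hi)
    exact mul_le_mul_of_nonneg_left ((hb i hiV).trans_eq hai.symm) (hμ i hi).le
  have hsum : ∑ i ∈ T, μ i * b (w i) = ∑ i ∈ T, μ i * a (w i) := by
    simp only [map_sum, map_smul, smul_eq_mul] at hab
    exact (Finset.sum_le_sum hterm).antisymm hab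
  intro i hi
  obtain ⟨hiV, hai⟩ := mem_contactSet.1 (hT hi)
  have hi_eq := mul_left_cancel₀ (hμ i hi).ne' ((Finset.sum_eq_sum_iff_of_le hterm).1 hsum i hi)
  exact mem_contactSet.2 ⟨hiV, hi_eq.trans hai⟩

/-! ### Coordinates with respect to a facet -/

/-- The functionals `κ i`, `i ∈ T`, are the coordinates with respect to the basis `w i`, `i ∈ T`.
Nothing is required of `κ i` for `i ∉ T`. -/
structure IsDualFamily (w : ι → E) (T : Finset ι) (κ : ι → Module.Dual ℝ E) : Prop where
  sum_smul : ∀ x, ∑ i ∈ T, κ i x • w i = x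
  apply_self : ∀ i ∈ T, κ i (w i) = 1
  apply_of_ne : ∀ i ∈ T, ∀ j ∈ T, i ≠ j → κ i (w j) = 0

/-- The coordinates with respect to the basis `w i`, `i ∈ T`, extended to all index sets `T` by an
arbitrary value. -/
def dualFamily (w : ι → E) (T : Finset ι) : ι → Module.Dual ℝ E :=
  Classical.epsilon (IsDualFamily w T)

lemma isDualFamily_dualFamily (hli : LinearIndepOn ℝ w (T : Set ι))
    (hspan : Submodule.span ℝ (w '' T) = ⊤) : IsDualFamily w T (dualFamily w T) := by
  classical
  have hspan' : ⊤ ≤ Submodule.span ℝ (Set.range fun i : T ↦ w i) := by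
    rw [← hspan, Set.image_eq_range]
    rfl
  let B : Module.Basis T ℝ E := Module.Basis.mk hli hspan'
  have hB (i : T) : B i = w i := Module.Basis.mk_apply hli hspan' i
  refine Classical.epsilon_spec (p := IsDualFamily w T)
    ⟨fun i ↦ if h : i ∈ T then B.coord ⟨i, h⟩ else 0, fun x ↦ ?_, fun i hi ↦ ?_,
      fun i hi j hj hij ↦ ?_⟩
  · rw [← Finset.sum_coe_sort T]
    conv_rhs => rw [← B.sum_repr x]
    simp [hB]
  · simp [hi, ← hB ⟨i, hi⟩]
  · simp [hi, ← hB ⟨j, hj⟩, hij.symm]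

lemma IsCompleteSimplicial.isDualFamily (hw : IsCompleteSimplicial V w)
    (hT : IsBoundaryFacet V w T) : IsDualFamily w T (dualFamily w T) := by
  have hli := hw.linearIndepOn T hT
  obtain ⟨_, -, -, hspan⟩ := hT
  exact isDualFamily_dualFamily hli hspan

lemma IsCompleteSimplicial.card_eq_finrank (hw : IsCompleteSimplicial V w)
    (hT : IsBoundaryFacet V w T) : T.card = Module.finrank ℝ E := by
  have hcard := finrank_span_eq_card (hw.linearIndepOn T hT)
  obtain ⟨_, -, -, hspan⟩ := hT
  rw [← Set.image_eq_range, hspan, finrank_top] at hcard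
  simpa using hcard.symm

lemma IsDualFamily.apply_sum_eq_one (hκ : IsDualFamily w T κ) (hST : S ⊆ T) {i : ι} (hi : i ∈ S) :
    κ i (∑ j ∈ S, w j) = 1 := by
  rw [map_sum, Finset.sum_eq_single_of_mem i hi, hκ.apply_self i (hST hi)]
  exact fun j hj hji ↦ hκ.apply_of_ne i (hST hi) j (hST hj) hji.symm

lemma IsDualFamily.apply_sum_eq_zero (hκ : IsDualFamily w T κ) (hST : S ⊆ T) {i : ι} (hiT : i ∈ T)
    (hiS : i ∉ S) : κ i (∑ j ∈ S, w j) = 0 := by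
  rw [map_sum]
  exact Finset.sum_eq_zero fun j hj ↦
    hκ.apply_of_ne i hiT j (hST hj) (ne_of_mem_of_not_mem hj hiS).symm

lemma IsDualFamily.subset_of_nonneg_apply_sum (hκ : IsDualFamily w T κ)
    (ha : IsSupporting V w a) (hT : T = contactSet V w a) (hS : IsBoundaryFace V w S)
    (hnonneg : ∀ i ∈ T, 0 ≤ κ i (∑ j ∈ S, w j)) : S ⊆ T := by
  obtain ⟨b, hb, hSb⟩ := hS
  have hba : b (∑ j ∈ S, w j) ≤ a (∑ j ∈ S, w j) := by
    simpa only [hκ.sum_smul] using apply_le_apply_of_subset_contactSet hT.subset hb hnonneg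
  rw [hT]
  exact subset_contactSet_of_apply_le (μ := 1) hSb ha (by simp) (by simpa using hba)

/-! ### Generic vectors -/

/-- `c` lies on none of the proper subspaces spanned by points of the configuration. -/
def IsGeneric (V : Finset ι) (w : ι → E) (c : E) : Prop :=
  ∀ S ⊆ V, Submodule.span ℝ (w '' S) ≠ ⊤ → c ∉ Submodule.span ℝ (w '' S)

lemma IsGeneric.neg (hc : IsGeneric V w c) : IsGeneric V w (-c) :=
  fun S hS hspan ↦ by simpa using hc S hS hspan

lemma exists_isGeneric (V : Finset ι) (w : ι → E) : ∃ c, IsGeneric V w c := by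
  obtain ⟨c, hc⟩ := Submodule.exists_forall_notMem_of_forall_ne_top
    (fun S : {S : V.powerset // Submodule.span ℝ (w '' (S.1 : Set ι)) ≠ ⊤} ↦
      Submodule.span ℝ (w '' (S.1.1 : Set ι))) fun S ↦ S.2
  exact ⟨c, fun S hS hspan ↦ hc ⟨⟨S, Finset.mem_powerset.2 hS⟩, hspan⟩⟩

lemma IsGeneric.apply_ne_zero (hc : IsGeneric V w c) (hκ : IsDualFamily w T κ) (hTV : T ⊆ V)
    {i : ι} (hi : i ∈ T) : κ i c ≠ 0 := by
  classical
  have hker : Submodule.span ℝ (w '' (T.erase i : Finset ι)) ≤ LinearMap.ker (κ i) := by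
    rw [Submodule.span_le]
    rintro _ ⟨j, hj, rfl⟩
    obtain ⟨hji, hjT⟩ := Finset.mem_erase.1 hj
    exact hκ.apply_of_ne i hi j hjT hji.symm
  intro hzero
  refine hc (T.erase i) ((T.erase_subset i).trans hTV) (fun htop ↦ ?_) ?_
  · have hi_ker : w i ∈ LinearMap.ker (κ i) := hker (htop ▸ Submodule.mem_top)
    exact one_ne_zero ((hκ.apply_self i hi).symm.trans hi_ker)
  · rw [← hκ.sum_smul c, ← Finset.add_sum_erase T _ hi, hzero, zero_smul, zero_add]
    exact Submodule.sum_mem _ fun j hj ↦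
      Submodule.smul_mem _ _ (Submodule.subset_span ⟨j, hj, rfl⟩)

lemma eventually_add_mul_pos {s : ℝ} (hs : 0 < s) (t : ℝ) :
    ∀ᶠ ε in 𝓝[>] (0 : ℝ), 0 < s + ε * t := by
  have hcont : Continuous fun ε : ℝ ↦ s + ε * t := by fun_prop
  exact (hcont.tendsto 0).mono_left nhdsWithin_le_nhds |>.eventually_const_lt (by simpa using hs)

lemma eventually_add_smul_notMem (W : Submodule ℝ E) (p : E) (hc : c ∉ W) :
    ∀ᶠ ε in 𝓝[>] (0 : ℝ), p + ε • c ∉ W := by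
  by_cases h : ∃ δ : ℝ, 0 < δ ∧ p + δ • c ∈ W
  · obtain ⟨δ, hδ, hδW⟩ := h
    filter_upwards [Ioo_mem_nhdsGT hδ] with ε hε hεW
    have hdiff : (δ - ε) • c ∈ W := by
      simpa [sub_smul] using W.sub_mem hδW hεW
    exact hc ((W.smul_mem_iff (sub_pos.2 hε.2).ne').1 hdiff)
  · push Not at h
    filter_upwards [self_mem_nhdsWithin] with ε hε using h ε hε

lemma IsGeneric.eventually_add_smul (hc : IsGeneric V w c) (p : E) :
    ∀ᶠ ε in 𝓝[>] (0 : ℝ), IsGeneric V w (p + ε • c) := by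
  have hall : ∀ᶠ ε in 𝓝[>] (0 : ℝ), ∀ S ∈ V.powerset, Submodule.span ℝ (w '' (S : Set ι)) ≠ ⊤ →
      p + ε • c ∉ Submodule.span ℝ (w '' (S : Set ι)) := by
    refine (eventually_all_finset _).2 fun S hS ↦ ?_
    by_cases hspan : Submodule.span ℝ (w '' (S : Set ι)) = ⊤
    · simp [hspan]
    · filter_upwards [eventually_add_smul_notMem _ p (hc S (Finset.mem_powerset.1 hS) hspan)]
        with ε hε _ using hε
  simpa [IsGeneric] using hall

/-! ### The partition of the boundary complex into intervals -/

/-- The restriction set of the facet `T` in direction `c`, as for a line shelling: the vertices of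
`T` at which `c` has a negative coordinate. -/
def restrictionSet (w : ι → E) (c : E) (T : Finset ι) : Finset ι :=
  {i ∈ T | dualFamily w T i c < 0}

lemma IsCompleteSimplicial.exists_facet_pos (hw : IsCompleteSimplicial V w) {y : E}
    (hy : IsGeneric V w y) :
    ∃ T, IsBoundaryFacet V w T ∧ ∀ i ∈ T, 0 < dualFamily w T i y := by
  obtain ⟨S, ⟨b, hb, hSb⟩, μ, hμ, rfl⟩ := hw.exists_mem_cone y
  have hT : IsBoundaryFacet V w (contactSet V w b) := by
    refine ⟨b, hb, rfl, by_contra fun hspan ↦ hy _ contactSet_subset hspan ?_⟩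
    exact Submodule.sum_mem _ fun i hi ↦
      Submodule.smul_mem _ _ (Submodule.subset_span ⟨i, hSb hi, rfl⟩)
  have hκ := hw.isDualFamily hT
  refine ⟨_, hT, fun i hi ↦ (hy.apply_ne_zero hκ contactSet_subset hi).symm.lt_of_le ?_⟩
  simp only [map_sum, map_smul, smul_eq_mul]
  refine Finset.sum_nonneg fun j hj ↦ mul_nonneg (hμ j hj) ?_
  obtain rfl | hij := eq_or_ne i j
  · simp [hκ.apply_self i hi]
  · exact (hκ.apply_of_ne i hi j (hSb hj) hij).ge

lemma IsCompleteSimplicial.existsUnique_facet_pos (hw : IsCompleteSimplicial V w) {y : E}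
    (hy : IsGeneric V w y) :
    ∃! T, IsBoundaryFacet V w T ∧ ∀ i ∈ T, 0 < dualFamily w T i y := by
  refine existsUnique_of_exists_of_unique (hw.exists_facet_pos hy) ?_
  rintro T T' ⟨hT, hpos⟩ ⟨hT', hpos'⟩
  have hsum := (hw.isDualFamily hT).sum_smul y
  have hsum' := (hw.isDualFamily hT').sum_smul y
  obtain ⟨a, ha, hTa, -⟩ := hT
  obtain ⟨a', ha', hTa', -⟩ := hT'
  have hle : a' y ≤ a y := by
    simpa only [hsum] using
      apply_le_apply_of_subset_contactSet hTa.subset ha' fun i hi ↦ (hpos i hi).le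
  have hle' : a y ≤ a' y := by
    simpa only [hsum'] using
      apply_le_apply_of_subset_contactSet hTa'.subset ha fun i hi ↦ (hpos' i hi).le
  refine Finset.Subset.antisymm (hTa' ▸ ?_) (hTa ▸ ?_)
  · exact subset_contactSet_of_apply_le hTa.subset ha' hpos (by simpa only [hsum] using hle')
  · exact subset_contactSet_of_apply_le hTa'.subset ha hpos' (by simpa only [hsum'] using hle)

lemma IsDualFamily.eventually_pos_iff (hκ : IsDualFamily w T κ) (hc : IsGeneric V w c)
    (hTV : T ⊆ V) (hST : S ⊆ T) {i : ι} (hi : i ∈ T) :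
    ∀ᶠ ε in 𝓝[>] (0 : ℝ), 0 < κ i (∑ j ∈ S, w j + ε • c) ↔ (κ i c < 0 → i ∈ S) := by
  simp only [map_add, map_smul, smul_eq_mul]
  by_cases hiS : i ∈ S
  · filter_upwards [eventually_add_mul_pos one_pos (κ i c)] with ε hε
    simpa [hiS, hκ.apply_sum_eq_one hST hiS] using hε
  · filter_upwards [self_mem_nhdsWithin] with ε (hε : 0 < ε)
    have hne : κ i c ≠ 0 := hc.apply_ne_zero hκ hTV hi
    simp [hiS, hκ.apply_sum_eq_zero hST hi hiS, mul_pos_iff_of_pos_left hε, hne.symm.le_iff_lt]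

lemma IsCompleteSimplicial.eventually_facet_pos_iff (hw : IsCompleteSimplicial V w)
    (hc : IsGeneric V w c) (hS : IsBoundaryFace V w S) (hT : IsBoundaryFacet V w T) :
    ∀ᶠ ε in 𝓝[>] (0 : ℝ), (∀ i ∈ T, 0 < dualFamily w T i (∑ j ∈ S, w j + ε • c)) ↔
      restrictionSet w c T ⊆ S ∧ S ⊆ T := by
  have hκ := hw.isDualFamily hT
  have hTV := hT.isBoundaryFace.subset
  obtain ⟨a, ha, hTa, -⟩ := hT
  by_cases hST : S ⊆ T
  · filter_upwards [(eventually_all_finset T).2 fun i hi ↦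
      hκ.eventually_pos_iff hc hTV hST hi] with ε hε
    simp only [restrictionSet, hST, and_true, Finset.subset_iff, Finset.mem_filter, and_imp]
    exact forall₂_congr hε
  · obtain ⟨i, hi, hneg⟩ : ∃ i ∈ T, dualFamily w T i (∑ j ∈ S, w j) < 0 := by
      by_contra! hnonneg
      exact hST (hκ.subset_of_nonneg_apply_sum ha hTa hS hnonneg)
    filter_upwards [eventually_add_mul_pos (neg_pos.2 hneg) (-dualFamily w T i c)] with ε hε
    refine iff_of_false (fun hpos ↦ ?_) fun h ↦ hST h.2
    have hi_pos := hpos i hi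
    simp only [map_add, map_smul, smul_eq_mul] at hi_pos
    linarith

section DecidableEq

variable [DecidableEq ι]

-- `T` is the facet whose cone is entered on leaving the barycentre of `S` in direction `c`.
lemma IsCompleteSimplicial.existsUnique_facet_mem_Icc (hw : IsCompleteSimplicial V w)
    (hc : IsGeneric V w c) (hS : IsBoundaryFace V w S) :
    ∃! T, IsBoundaryFacet V w T ∧ S ∈ Finset.Icc (restrictionSet w c T) T := by
  have hiff : ∀ᶠ ε in 𝓝[>] (0 : ℝ), ∀ T ∈ boundaryFacets V w,
      (∀ i ∈ T, 0 < dualFamily w T i (∑ j ∈ S, w j + ε • c)) ↔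
        restrictionSet w c T ⊆ S ∧ S ⊆ T :=
    (eventually_all_finset _).2 fun T hT ↦
      hw.eventually_facet_pos_iff hc hS (mem_boundaryFacets.1 hT)
  obtain ⟨ε, hε, hgen⟩ := (hiff.and (hc.eventually_add_smul (∑ j ∈ S, w j))).exists
  refine (existsUnique_congr fun T ↦ and_congr_right fun hT ↦ ?_).1
    (hw.existsUnique_facet_pos hgen)
  rw [Finset.mem_Icc]
  exact hε T (mem_boundaryFacets.2 hT)

lemma sum_pow_card_Icc {R : Type*} [CommSemiring R] (x : R) {N T : Finset ι} (hNT : N ⊆ T) :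
    ∑ S ∈ Finset.Icc N T, x ^ S.card = x ^ N.card * (1 + x) ^ (T.card - N.card) := by
  have hdisj {U : Finset ι} (hU : U ∈ (T \ N).powerset) : Disjoint N U :=
    Finset.disjoint_sdiff.mono_right (Finset.mem_powerset.1 hU)
  rw [Finset.Icc_eq_image_powerset hNT, Finset.sum_image fun U hU U' hU' hUU' ↦ by
    rw [← Finset.union_sdiff_cancel_left (hdisj hU), hUU',
      Finset.union_sdiff_cancel_left (hdisj hU')],
    ← Finset.card_sdiff_of_subset hNT, add_comm 1 x, ← Finset.sum_pow_mul_eq_add_pow,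
    Finset.mul_sum]
  refine Finset.sum_congr rfl fun U hU ↦ ?_
  rw [Finset.card_union_of_disjoint (hdisj hU), pow_add, one_pow, mul_one]

lemma IsCompleteSimplicial.boundaryFaces_eq_biUnion (hw : IsCompleteSimplicial V w)
    (hc : IsGeneric V w c) :
    boundaryFaces V w =
      (boundaryFacets V w).biUnion fun T ↦ Finset.Icc (restrictionSet w c T) T := by
  ext S
  simp only [Finset.mem_biUnion, mem_boundaryFaces, mem_boundaryFacets]
  refine ⟨fun hS ↦ (hw.existsUnique_facet_mem_Icc hc hS).exists, ?_⟩
  rintro ⟨T, hT, hST⟩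
  exact hT.isBoundaryFace.mono (Finset.mem_Icc.1 hST).2

lemma IsCompleteSimplicial.pairwiseDisjoint_Icc (hw : IsCompleteSimplicial V w)
    (hc : IsGeneric V w c) :
    (boundaryFacets V w : Set (Finset ι)).PairwiseDisjoint
      fun T ↦ Finset.Icc (restrictionSet w c T) T := by
  intro T hT T' hT' hne
  refine Finset.disjoint_left.2 fun S hS hS' ↦ hne ?_
  have hT := mem_boundaryFacets.1 hT
  have hface : IsBoundaryFace V w S := hT.isBoundaryFace.mono (Finset.mem_Icc.1 hS).2
  exact (hw.existsUnique_facet_mem_Icc hc hface).unique ⟨hT, hS⟩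
    ⟨mem_boundaryFacets.1 hT', hS'⟩

lemma IsCompleteSimplicial.restrictionSet_neg (hw : IsCompleteSimplicial V w)
    (hc : IsGeneric V w c) (hT : IsBoundaryFacet V w T) :
    restrictionSet w (-c) T = T \ restrictionSet w c T := by
  rw [restrictionSet, restrictionSet, ← Finset.filter_not]
  refine Finset.filter_congr fun i hi ↦ ?_
  have hne := hc.apply_ne_zero (hw.isDualFamily hT) hT.isBoundaryFace.subset hi
  simp [hne.symm.le_iff_lt]

end DecidableEq

lemma IsCompleteSimplicial.sum_pow_card_boundaryFaces {R : Type*} [CommSemiring R] (x : R)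
    (hw : IsCompleteSimplicial V w) (hc : IsGeneric V w c) :
    ∑ S ∈ boundaryFaces V w, x ^ S.card =
      ∑ T ∈ boundaryFacets V w, x ^ (restrictionSet w c T).card *
        (1 + x) ^ (T.card - (restrictionSet w c T).card) := by
  classical
  rw [hw.boundaryFaces_eq_biUnion hc, Finset.sum_biUnion (hw.pairwiseDisjoint_Icc hc)]
  exact Finset.sum_congr rfl fun T _ ↦ sum_pow_card_Icc x (Finset.filter_subset _ _)

theorem IsCompleteSimplicial.sum_neg_one_sub_pow_card {R : Type*} [CommRing R] (x : R)
    (hw : IsCompleteSimplicial V w) :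
    ∑ S ∈ boundaryFaces V w, (-1 - x) ^ S.card =
      (-1) ^ Module.finrank ℝ E * ∑ S ∈ boundaryFaces V w, x ^ S.card := by
  classical
  obtain ⟨c, hc⟩ := exists_isGeneric V w
  rw [hw.sum_pow_card_boundaryFaces _ hc, hw.sum_pow_card_boundaryFaces x hc.neg, Finset.mul_sum]
  refine Finset.sum_congr rfl fun T hT ↦ ?_
  have hT := mem_boundaryFacets.1 hT
  have hsub : restrictionSet w c T ⊆ T := Finset.filter_subset _ _
  have hle := Finset.card_le_card hsub
  rw [hw.restrictionSet_neg hc hT, Finset.card_sdiff_of_subset hsub, ← hw.card_eq_finrank hT,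
    Nat.sub_sub_self hle]
  calc (-1 - x) ^ (restrictionSet w c T).card *
        (1 + (-1 - x)) ^ (T.card - (restrictionSet w c T).card)
      = (-1) ^ ((restrictionSet w c T).card + (T.card - (restrictionSet w c T).card)) *
        (x ^ (T.card - (restrictionSet w c T).card) *
          (1 + x) ^ (restrictionSet w c T).card) := by
        rw [show -1 - x = -1 * (1 + x) by ring, show 1 + -1 * (1 + x) = -1 * x by ring, mul_pow,
          mul_pow, pow_add]
        ring
    _ = _ := by rw [Nat.add_sub_cancel' hle]

/-! ### Faces of a simplicial configuration -/

lemma IsCompleteSimplicial.exists_facet_superset (hw : IsCompleteSimplicial V w)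
    (hS : IsBoundaryFace V w S) : ∃ T, IsBoundaryFacet V w T ∧ S ⊆ T := by
  classical
  obtain ⟨c, hc⟩ := exists_isGeneric V w
  obtain ⟨T, hT, hST⟩ := (hw.existsUnique_facet_mem_Icc hc hS).exists
  exact ⟨T, hT, (Finset.mem_Icc.1 hST).2⟩

lemma IsCompleteSimplicial.card_le_finrank (hw : IsCompleteSimplicial V w)
    (hS : IsBoundaryFace V w S) : S.card ≤ Module.finrank ℝ E := by
  obtain ⟨T, hT, hST⟩ := hw.exists_facet_superset hS
  exact (Finset.card_le_card hST).trans_eq (hw.card_eq_finrank hT)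

lemma IsCompleteSimplicial.finrank_span_image (hw : IsCompleteSimplicial V w)
    (hS : IsBoundaryFace V w S) : Module.finrank ℝ (Submodule.span ℝ (w '' S)) = S.card := by
  obtain ⟨T, hT, hST⟩ := hw.exists_facet_superset hS
  have hli : LinearIndepOn ℝ w (S : Set ι) := (hw.linearIndepOn T hT).mono (by exact_mod_cast hST)
  have hcard := finrank_span_eq_card hli
  rw [← Set.image_eq_range] at hcard
  simpa using hcard

-- Tilting the functional of `T` towards the vertices outside `S` keeps contact only along `S`.
lemma IsDualFamily.exists_contactSet_eq (hκ : IsDualFamily w T κ) (ha : IsSupporting V w a)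
    (hT : T = contactSet V w a) (hST : S ⊆ T) : ∃ b, IsSupporting V w b ∧ contactSet V w b = S := by
  classical
  let g : Module.Dual ℝ E := ∑ i ∈ T \ S, κ i
  have hgS {j : ι} (hj : j ∈ S) : g (w j) = 0 := by
    rw [LinearMap.sum_apply]
    refine Finset.sum_eq_zero fun i hi ↦ ?_
    obtain ⟨hiT, hiS⟩ := Finset.mem_sdiff.1 hi
    exact hκ.apply_of_ne i hiT j (hST hj) (ne_of_mem_of_not_mem hj hiS).symm
  have hgT {j : ι} (hj : j ∈ T \ S) : g (w j) = 1 := by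
    have hjT := (Finset.mem_sdiff.1 hj).1
    rw [LinearMap.sum_apply, Finset.sum_eq_single_of_mem j hj, hκ.apply_self j hjT]
    exact fun i hi hij ↦ hκ.apply_of_ne i (Finset.mem_sdiff.1 hi).1 j hjT hij
  have hlt : ∀ᶠ ε in 𝓝[>] (0 : ℝ), ∀ i ∈ V \ S, (a - ε • g) (w i) < 1 := by
    refine (eventually_all_finset _).2 fun i hi ↦ ?_
    obtain ⟨hiV, hiS⟩ := Finset.mem_sdiff.1 hi
    by_cases hiT : i ∈ T
    · filter_upwards [self_mem_nhdsWithin] with ε (hε : 0 < ε)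
      have hai : a (w i) = 1 := (mem_contactSet.1 (hT ▸ hiT)).2
      simpa [hai, hgT (Finset.mem_sdiff.2 ⟨hiT, hiS⟩)] using hε
    · have hai : a (w i) < 1 := (ha i hiV).lt_of_ne fun h ↦ hiT (hT ▸ mem_contactSet.2 ⟨hiV, h⟩)
      filter_upwards [eventually_add_mul_pos (sub_pos.2 hai) (g (w i))] with ε hε
      simp only [LinearMap.sub_apply, LinearMap.smul_apply, smul_eq_mul]
      linarith
  obtain ⟨ε, hε⟩ := hlt.exists
  have heq {i : ι} (hi : i ∈ S) : (a - ε • g) (w i) = 1 := by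
    simpa [hgS hi] using (mem_contactSet.1 (hT ▸ hST hi)).2
  have hSV : S ⊆ V := hST.trans (hT ▸ contactSet_subset)
  refine ⟨a - ε • g, fun i hi ↦ ?_,
    Finset.ext fun i ↦ mem_contactSet.trans ⟨fun h ↦ ?_, fun h ↦ ⟨hSV h, heq h⟩⟩⟩
  · by_cases hiS : i ∈ S
    · exact (heq hiS).le
    · exact (hε i (Finset.mem_sdiff.2 ⟨hi, hiS⟩)).le
  · by_contra hiS
    exact (hε i (Finset.mem_sdiff.2 ⟨h.1, hiS⟩)).ne h.2

lemma IsCompleteSimplicial.exists_contactSet_eq (hw : IsCompleteSimplicial V w)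
    (hS : IsBoundaryFace V w S) : ∃ b, IsSupporting V w b ∧ contactSet V w b = S := by
  obtain ⟨T, hT, hST⟩ := hw.exists_facet_superset hS
  have hκ := hw.isDualFamily hT
  obtain ⟨a, ha, hTa, -⟩ := hT
  exact hκ.exists_contactSet_eq ha hTa hST

end Configuration

/-! ### Faces of the convex hull of a finite set -/

section ConvexHull

open Filter Topology

variable {E : Type*}

lemma finrank_vectorSpan_add_one_of_apply_sub_eq_one [AddCommGroup E] [Module ℝ E]
    [FiniteDimensional ℝ E] {A : Set E} {o : E} {b : Module.Dual ℝ E}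
    (hA : A.Nonempty) (hb : ∀ x ∈ A, b (x - o) = 1) :
    Module.finrank ℝ (vectorSpan ℝ A) + 1 =
      Module.finrank ℝ (Submodule.span ℝ ((· - o) '' A)) := by
  obtain ⟨s, hs⟩ := hA
  have hker : vectorSpan ℝ A ≤ LinearMap.ker b := by
    refine Submodule.span_le.2 ?_
    rintro _ ⟨x, hx, y, hy, rfl⟩
    simpa [sub_eq_zero] using (hb x hx).trans (hb y hy).symm
  have hs_notMem : s - o ∉ vectorSpan ℝ A := fun h ↦
    one_ne_zero ((hb s hs).symm.trans (hker h))
  have hspan : Submodule.span ℝ ((· - o) '' A) = vectorSpan ℝ A ⊔ Submodule.span ℝ {s - o} := by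
    have hmem {x : E} (hx : x ∈ A) : x - o ∈ Submodule.span ℝ ((· - o) '' A) :=
      Submodule.subset_span ⟨x, hx, rfl⟩
    refine le_antisymm (Submodule.span_le.2 ?_) (sup_le (Submodule.span_le.2 ?_) ?_)
    · rintro _ ⟨x, hx, rfl⟩
      simpa using Submodule.add_mem_sup (vsub_mem_vectorSpan ℝ hx hs)
        (Submodule.mem_span_singleton_self (s - o))
    · rintro _ ⟨x, hx, y, hy, rfl⟩
      simpa using Submodule.sub_mem _ (hmem hx) (hmem hy)
    · exact (Submodule.span_singleton_le_iff_mem _ _).2 (hmem hs)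
  rw [hspan, Submodule.finrank_sup_span_singleton hs_notMem]

lemma exists_isSupporting_of_le [AddCommGroup E] [Module ℝ E] {V : Finset E} {o : E}
    {l : Module.Dual ℝ E} {M : ℝ} (ho : l o < M) (hV : ∀ v ∈ V, l v ≤ M) :
    ∃ b, IsSupporting V (· - o) b ∧ ∀ x, b (x - o) = 1 ↔ l x = M := by
  have hpos : 0 < M - l o := sub_pos.2 ho
  refine ⟨(M - l o)⁻¹ • l, fun v hv ↦ ?_, fun x ↦ ?_⟩
  · simpa [inv_mul_le_iff₀ hpos] using hV v hv
  · simp [inv_mul_eq_one₀ hpos.ne', eq_comm]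

variable [NormedAddCommGroup E] [NormedSpace ℝ E]
  {V S : Finset E} {K F : Set E} {o x y : E} {b : Module.Dual ℝ E}

lemma exists_pos_add_smul_mem_frontier (hK : IsCompact K) (ho : o ∈ interior K) (hx : x ≠ 0) :
    ∃ t : ℝ, 0 < t ∧ o + t • x ∈ frontier K := by
  have hcont : Continuous fun t : ℝ ↦ o + t • x := by fun_prop
  have hcompact : IsCompact ((fun t : ℝ ↦ o + t • x) ⁻¹' K) :=
    ((Homeomorph.addLeft o).isClosedEmbedding.comp
      (isClosedEmbedding_smul_left hx)).isCompact_preimage hK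
  obtain ⟨t, htK, ht_max⟩ := hcompact.exists_isGreatest ⟨0, by simpa using interior_subset ho⟩
  have hlt {s : ℝ} (hs : o + s • x ∈ interior K) : s < t := by
    rw [← Set.mem_Iio, ← interior_Iic]
    exact interior_mono (fun r hr ↦ ht_max hr) (preimage_interior_subset_interior_preimage hcont hs)
  exact ⟨t, hlt (by simpa using ho), subset_closure htK, fun h ↦ (hlt h).false⟩

lemma eq_of_isExtreme_of_mem_interior (hF : IsExtreme ℝ K F) (hoF : o ∈ F)
    (ho : o ∈ interior K) : F = K := by
  refine hF.subset.antisymm fun y hy ↦ ?_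
  have hcont : Continuous fun t : ℝ ↦ o + t • (o - y) := by fun_prop
  have hmem : ∀ᶠ t in 𝓝 (0 : ℝ), o + t • (o - y) ∈ K :=
    hcont.continuousAt.eventually_mem (by simpa using mem_interior_iff_mem_nhds.1 ho)
  obtain ⟨t, htK, ht⟩ := ((hmem.filter_mono nhdsWithin_le_nhds).and
    (eventually_mem_nhdsWithin (s := Set.Ioi (0 : ℝ)))).exists
  rw [Set.mem_Ioi] at ht
  refine hF.left_mem_of_mem_openSegment hy htK hoF
    ⟨t / (1 + t), 1 / (1 + t), by positivity, by positivity, by field_simp; ring, ?_⟩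
  match_scalars <;> field_simp
  ring

lemma notMem_of_isExposed_of_finrank_lt (hF : IsExposed ℝ K F) (ho : o ∈ interior K)
    (hdim : Module.finrank ℝ (vectorSpan ℝ F) < Module.finrank ℝ E) : o ∉ F := by
  intro hoF
  have hspan : affineSpan ℝ K = ⊤ :=
    affineSpan_eq_top_of_nonempty_interior ⟨o, interior_mono (subset_convexHull ℝ K) ho⟩
  rw [eq_of_isExtreme_of_mem_interior hF.isExtreme hoF ho, ← direction_affineSpan, hspan,
    AffineSubspace.direction_top, finrank_top] at hdim
  exact hdim.false

lemma exists_isSupporting_of_notMem_interior (ho : o ∈ interior (convexHull ℝ (V : Set E)))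
    (hy : y ∉ interior (convexHull ℝ (V : Set E))) :
    ∃ b, IsSupporting V (· - o) b ∧ b (y - o) = 1 := by
  have hconv := convex_convexHull ℝ (V : Set E)
  obtain ⟨l, hl⟩ := geometric_hahn_banach_open_point hconv.interior isOpen_interior hy
  have hle : closure (interior (convexHull ℝ (V : Set E))) ⊆ {z | l z ≤ l y} :=
    closure_minimal (fun z hz ↦ (hl z hz).le) (isClosed_le l.continuous continuous_const)
  rw [hconv.closure_interior_eq_closure_of_nonempty_interior ⟨o, ho⟩] at hle
  obtain ⟨b, hb, hb_iff⟩ := exists_isSupporting_of_le (l := (l : Module.Dual ℝ E)) (hl o ho)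
    fun v hv ↦ hle (subset_closure (subset_convexHull ℝ _ hv))
  exact ⟨b, hb, (hb_iff y).2 rfl⟩

lemma IsSupporting.apply_sub_le_one (hb : IsSupporting V (· - o) b)
    (hx : x ∈ convexHull ℝ (V : Set E)) : b (x - o) ≤ 1 := by
  have hV : (V : Set E) ⊆ {x | b x ≤ 1 + b o} := fun v hv ↦ by
    simpa [sub_le_iff_le_add] using hb v hv
  simpa [sub_le_iff_le_add] using convexHull_min hV (convex_halfSpace_le b.isLinear _) hx

lemma eq_convexHull_inter_of_isExposed {A : Set E} (hA : A.Finite)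
    (hF : IsExposed ℝ (convexHull ℝ A) F) : F = convexHull ℝ (F ∩ A) := by
  have hconv : Convex ℝ F := hF.convex (convex_convexHull ℝ A)
  have hext : F.extremePoints ℝ ⊆ F ∩ A := by
    rw [hF.isExtreme.extremePoints_eq]
    exact Set.inter_subset_inter_right F extremePoints_convexHull_subset
  refine Set.Subset.antisymm ?_ (convexHull_min Set.inter_subset_left hconv)
  calc F = closure (convexHull ℝ (F.extremePoints ℝ)) :=
        (closure_convexHull_extremePoints (hF.isCompact (hA.isCompact_convexHull ℝ)) hconv).symm
    _ ⊆ closure (convexHull ℝ (F ∩ A)) := closure_mono (convexHull_mono hext)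
    _ = convexHull ℝ (F ∩ A) := ((hA.inter_of_right F).isClosed_convexHull ℝ).closure_eq

variable [FiniteDimensional ℝ E]

lemma IsSupporting.isExposed_setOf (hb : IsSupporting V (· - o) b) :
    IsExposed ℝ (convexHull ℝ (V : Set E)) {x ∈ convexHull ℝ (V : Set E) | b (x - o) = 1} := by
  rintro ⟨z, hz, hbz⟩
  refine ⟨LinearMap.toContinuousLinearMap b, Set.ext fun x ↦ and_congr_right fun hx ↦ ?_⟩
  simp only [LinearMap.coe_toContinuousLinearMap']
  refine ⟨fun hbx y hy ↦ ?_, fun hmax ↦ (hb.apply_sub_le_one hx).antisymm ?_⟩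
  · simpa using (hb.apply_sub_le_one hy).trans_eq hbx.symm
  · simpa [← hbz] using hmax z hz

lemma IsSupporting.convexHull_contactSet (hb : IsSupporting V (· - o) b) :
    convexHull ℝ (contactSet V (· - o) b : Set E) =
      {x ∈ convexHull ℝ (V : Set E) | b (x - o) = 1} := by
  have hinter : (contactSet V (· - o) b : Set E) =
      {x ∈ convexHull ℝ (V : Set E) | b (x - o) = 1} ∩ V := by
    ext v
    simpa [mem_contactSet, and_comm (a := v ∈ V)] using
      fun hv _ ↦ subset_convexHull ℝ (V : Set E) hv
  rw [hinter]
  exact (eq_convexHull_inter_of_isExposed V.finite_toSet hb.isExposed_setOf).symm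

lemma IsSupporting.isExposed_convexHull_contactSet (hb : IsSupporting V (· - o) b) :
    IsExposed ℝ (convexHull ℝ (V : Set E)) (convexHull ℝ (contactSet V (· - o) b : Set E)) :=
  hb.convexHull_contactSet ▸ hb.isExposed_setOf

lemma exists_eq_convexHull_contactSet (hF : IsExposed ℝ (convexHull ℝ (V : Set E)) F)
    (hne : F.Nonempty) (ho : o ∈ convexHull ℝ (V : Set E)) (hoF : o ∉ F) :
    ∃ b, IsSupporting V (· - o) b ∧ F = convexHull ℝ (contactSet V (· - o) b : Set E) := by
  obtain ⟨l, rfl⟩ := hF hne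
  obtain ⟨z, hz, hz_max⟩ := hne
  have hlt : l o < l z := by
    obtain ⟨y, hy, hoy⟩ : ∃ y ∈ convexHull ℝ (V : Set E), l o < l y := by
      simpa [ho] using hoF
    exact hoy.trans_le (hz_max y hy)
  obtain ⟨b, hb, hb_iff⟩ := exists_isSupporting_of_le (l := (l : Module.Dual ℝ E)) hlt
    fun v hv ↦ hz_max v (subset_convexHull ℝ _ hv)
  refine ⟨b, hb, ?_⟩
  rw [hb.convexHull_contactSet]
  refine Set.ext fun x ↦ and_congr_right fun hx ↦ ?_
  rw [hb_iff]
  exact ⟨fun h ↦ (hz_max x hx).antisymm (h z hz), fun h y hy ↦ (hz_max y hy).trans_eq h.symm⟩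

lemma exists_mem_cone_of_mem_interior (ho : o ∈ interior (convexHull ℝ (V : Set E))) (x : E) :
    ∃ S, IsBoundaryFace V (· - o) S ∧
      ∃ μ : E → ℝ, (∀ v ∈ S, 0 ≤ μ v) ∧ ∑ v ∈ S, μ v • (v - o) = x := by
  obtain rfl | hx := eq_or_ne x 0
  · exact ⟨∅, isBoundaryFace_empty, 0, by simp, by simp⟩
  have hcompact : IsCompact (convexHull ℝ (V : Set E)) := V.finite_toSet.isCompact_convexHull ℝ
  obtain ⟨t, ht, hfrontier⟩ := exists_pos_add_smul_mem_frontier hcompact ho hx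
  have hmem : o + t • x ∈ convexHull ℝ (V : Set E) :=
    hcompact.isClosed.frontier_subset hfrontier
  obtain ⟨b, hb, hbt⟩ := exists_isSupporting_of_notMem_interior ho hfrontier.2
  have hface : o + t • x ∈ convexHull ℝ (contactSet V (· - o) b : Set E) :=
    hb.convexHull_contactSet ▸ ⟨hmem, hbt⟩
  obtain ⟨ν, hν, hν_sum, hν_eq⟩ := Finset.mem_convexHull'.1 hface
  refine ⟨_, ⟨b, hb, Finset.Subset.rfl⟩, fun v ↦ t⁻¹ * ν v,
    fun v hv ↦ mul_nonneg (inv_nonneg.2 ht.le) (hν v hv), ?_⟩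
  calc ∑ v ∈ contactSet V (· - o) b, (t⁻¹ * ν v) • (v - o)
      = t⁻¹ • (∑ v ∈ contactSet V (· - o) b, ν v • v -
          (∑ v ∈ contactSet V (· - o) b, ν v) • o) := by
        simp only [mul_smul, smul_sub, Finset.smul_sum, Finset.sum_smul, Finset.sum_sub_distrib]
    _ = x := by simp [hν_eq, hν_sum, ht.ne']

lemma IsCompleteSimplicial.finrank_vectorSpan_convexHull_add_one
    (hw : IsCompleteSimplicial V (· - o)) (hS : IsBoundaryFace V (· - o) S) (hne : S.Nonempty) :
    Module.finrank ℝ (vectorSpan ℝ (convexHull ℝ (S : Set E))) + 1 = S.card := by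
  rw [← direction_affineSpan, affineSpan_convexHull, direction_affineSpan,
    ← hw.finrank_span_image hS]
  obtain ⟨b, -, hSb⟩ := hS
  exact finrank_vectorSpan_add_one_of_apply_sub_eq_one hne fun v hv ↦ (mem_contactSet.1 (hSb hv)).2

lemma IsSupporting.convexHull_contactSet_inter (hb : IsSupporting V (· - o) b) :
    convexHull ℝ (contactSet V (· - o) b : Set E) ∩ V = contactSet V (· - o) b := by
  ext v
  simpa [hb.convexHull_contactSet, mem_contactSet, and_comm (a := v ∈ V)] using
    fun hv _ ↦ subset_convexHull ℝ (V : Set E) hv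

lemma IsCompleteSimplicial.injOn_convexHull (hw : IsCompleteSimplicial V (· - o)) :
    Set.InjOn (fun S : Finset E ↦ convexHull ℝ (S : Set E)) (boundaryFaces V (· - o)) := by
  intro S hS S' hS' heq
  obtain ⟨b, hb, rfl⟩ := hw.exists_contactSet_eq (mem_boundaryFaces.1 hS)
  obtain ⟨b', hb', rfl⟩ := hw.exists_contactSet_eq (mem_boundaryFaces.1 hS')
  rw [← Finset.coe_inj, ← hb.convexHull_contactSet_inter, ← hb'.convexHull_contactSet_inter]
  exact congrArg (· ∩ (V : Set E)) heq

end ConvexHull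

/-! ### The face numbers of a simplicial polytope -/

namespace ConvexPolytope

open Polynomial

variable {n : ℕ} {P : ConvexPolytope n} {o : EuclideanSpace ℝ (Fin n)}
  {S T : Finset (EuclideanSpace ℝ (Fin n))} {k : ℕ}

lemma finite_extremePoints_carrier (P : ConvexPolytope n) : (P.carrier.extremePoints ℝ).Finite :=
  P.verts.finite_toSet.subset extremePoints_convexHull_subset

/-- The vertices of a polytope, that is, its extreme points. The spanning set `P.verts` may contain
further points, so it cannot be used to count vertices. -/
def vertices (P : ConvexPolytope n) : Finset (EuclideanSpace ℝ (Fin n)) :=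
  P.finite_extremePoints_carrier.toFinset

/-- The `f`-polynomial `∑ f_{k-1} X ^ k` over `0 ≤ k ≤ n` of the boundary complex, with
`f_{-1} = 1`. -/
def fPolynomial (P : ConvexPolytope n) : ℤ[X] :=
  1 + ∑ k ∈ Finset.range n, (P.fcount k : ℤ[X]) * X ^ (k + 1)

lemma eval_fPolynomial (P : ConvexPolytope n) (x : ℤ) :
    P.fPolynomial.eval x = 1 + ∑ k ∈ Finset.range n, (P.fcount k : ℤ) * x ^ (k + 1) := by
  simp [fPolynomial, eval_finsetSum]

lemma coe_vertices (P : ConvexPolytope n) :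
    (P.vertices : Set (EuclideanSpace ℝ (Fin n))) = P.carrier.extremePoints ℝ :=
  P.finite_extremePoints_carrier.coe_toFinset

lemma convexHull_vertices (P : ConvexPolytope n) :
    convexHull ℝ (P.vertices : Set (EuclideanSpace ℝ (Fin n))) = P.carrier := by
  have hcompact : IsCompact P.carrier := P.verts.finite_toSet.isCompact_convexHull ℝ
  rw [← closure_convexHull_extremePoints hcompact (convex_convexHull ℝ _), ← coe_vertices,
    (P.vertices.finite_toSet.isClosed_convexHull ℝ).closure_eq]

lemma convexHull_mem_faces_of_isBoundaryFacet (hT : IsBoundaryFacet P.vertices (· - o) T)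
    (hne : T.Nonempty) :
    convexHull ℝ (T : Set (EuclideanSpace ℝ (Fin n))) ∈ P.faces (n - 1) := by
  obtain ⟨a, ha, rfl, hspan⟩ := hT
  have hdim := finrank_vectorSpan_add_one_of_apply_sub_eq_one hne fun v hv ↦
    (mem_contactSet.1 hv).2
  rw [hspan, finrank_top, finrank_euclideanSpace_fin] at hdim
  refine ⟨P.convexHull_vertices ▸ ha.isExposed_convexHull_contactSet,
    (Finset.coe_nonempty.2 hne).convexHull, ?_⟩
  rw [sdim, ← direction_affineSpan, affineSpan_convexHull, direction_affineSpan]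
  exact Nat.eq_sub_of_add_eq hdim

lemma IsSimplicial.card_le_of_isBoundaryFacet (hs : P.IsSimplicial)
    (hT : IsBoundaryFacet P.vertices (· - o) T) : T.card ≤ n := by
  obtain rfl | hne := T.eq_empty_or_nonempty
  · simp
  have hface := convexHull_mem_faces_of_isBoundaryFacet hT hne
  obtain ⟨s, hs_card, -, hs_eq⟩ := hs _ hface
  refine (Finset.card_le_card fun v hv ↦ ?_).trans_eq hs_card
  have hv_ext : v ∈ (convexHull ℝ (T : Set (EuclideanSpace ℝ (Fin n)))).extremePoints ℝ := by
    rw [hface.1.isExtreme.extremePoints_eq, ← coe_vertices]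
    exact ⟨subset_convexHull ℝ _ hv, hT.isBoundaryFace.subset hv⟩
  rw [hs_eq] at hv_ext
  exact extremePoints_convexHull_subset hv_ext

lemma IsSimplicial.isCompleteSimplicial (hs : P.IsSimplicial) (ho : o ∈ interior P.carrier) :
    IsCompleteSimplicial P.vertices (· - o) where
  exists_mem_cone := exists_mem_cone_of_mem_interior (P.convexHull_vertices.symm ▸ ho)
  linearIndepOn T hT := by
    have hcard := hs.card_le_of_isBoundaryFacet hT
    obtain ⟨_, -, -, hspan⟩ := hT
    refine linearIndependent_of_top_le_span_of_card_le_finrank ?_ (by simpa using hcard)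
    rw [← hspan, Set.image_eq_range]

lemma convexHull_mem_faces (hw : IsCompleteSimplicial P.vertices (· - o))
    (hS : IsBoundaryFace P.vertices (· - o) S) (hcard : S.card = k + 1) :
    convexHull ℝ (S : Set (EuclideanSpace ℝ (Fin n))) ∈ P.faces k := by
  have hne : S.Nonempty := Finset.card_pos.1 (by lia)
  have hdim := hw.finrank_vectorSpan_convexHull_add_one hS hne
  obtain ⟨b, hb, rfl⟩ := hw.exists_contactSet_eq hS
  refine ⟨P.convexHull_vertices ▸ hb.isExposed_convexHull_contactSet,
    (Finset.coe_nonempty.2 hne).convexHull, ?_⟩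
  exact Nat.succ_injective (hdim.trans hcard)

lemma exists_convexHull_eq_of_mem_faces (ho : o ∈ interior P.carrier)
    (hw : IsCompleteSimplicial P.vertices (· - o)) (hk : k < n)
    {F : Set (EuclideanSpace ℝ (Fin n))} (hF : F ∈ P.faces k) :
    ∃ S, IsBoundaryFace P.vertices (· - o) S ∧ S.card = k + 1 ∧ convexHull ℝ (S : Set _) = F := by
  obtain ⟨hexp, hne, hdim⟩ := hF
  have hoF : o ∉ F := notMem_of_isExposed_of_finrank_lt hexp ho
    (by rw [finrank_euclideanSpace_fin]; exact hdim.trans_lt hk)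
  rw [← convexHull_vertices] at hexp ho
  obtain ⟨b, hb, rfl⟩ := exists_eq_convexHull_contactSet hexp hne (interior_subset ho) hoF
  have hface : IsBoundaryFace P.vertices (· - o) (contactSet P.vertices (· - o) b) :=
    ⟨b, hb, Finset.Subset.rfl⟩
  have hcard := hw.finrank_vectorSpan_convexHull_add_one hface
    (Finset.coe_nonempty.1 (convexHull_nonempty_iff.1 hne))
  exact ⟨_, hface, by rw [← hcard, ← hdim, sdim], rfl⟩

lemma IsSimplicial.fcount_eq_card (hs : P.IsSimplicial) (ho : o ∈ interior P.carrier)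
    (hk : k < n) :
    P.fcount k = {S ∈ boundaryFaces P.vertices (· - o) | S.card = k + 1}.card := by
  have hw := hs.isCompleteSimplicial ho
  have himage : P.faces k =
      (fun S : Finset (EuclideanSpace ℝ (Fin n)) ↦ convexHull ℝ (S : Set _)) ''
        ↑(Finset.filter (·.card = k + 1) (boundaryFaces P.vertices (· - o))) := by
    ext F
    simp only [Finset.coe_filter, mem_boundaryFaces, Set.mem_image, Set.mem_ofPred_eq, and_assoc]
    refine ⟨exists_convexHull_eq_of_mem_faces ho hw hk, ?_⟩
    rintro ⟨S, hS, hcard, rfl⟩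
    exact convexHull_mem_faces hw hS hcard
  rw [fcount, himage, (hw.injOn_convexHull.mono (Finset.filter_subset _ _)).ncard_image,
    Set.ncard_coe_finset]

lemma IsSimplicial.fPolynomial_eq_sum (hs : P.IsSimplicial) (ho : o ∈ interior P.carrier) :
    P.fPolynomial = ∑ S ∈ boundaryFaces P.vertices (· - o), X ^ S.card := by
  have hw := hs.isCompleteSimplicial ho
  have hempty : {S ∈ boundaryFaces P.vertices (· - o) | S.card = 0} = {∅} := by
    ext S
    simpa [mem_boundaryFaces] using fun h : S = ∅ ↦ h ▸ isBoundaryFace_empty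
  have hmaps : ∀ S ∈ boundaryFaces P.vertices (· - o), S.card ∈ Finset.range (n + 1) :=
    fun S hS ↦ by
      simpa [Nat.lt_succ_iff] using hw.card_le_finrank (mem_boundaryFaces.1 hS)
  calc P.fPolynomial
      = ∑ k ∈ Finset.range (n + 1),
          ({S ∈ boundaryFaces P.vertices (· - o) | S.card = k}.card : ℤ[X]) * X ^ k := by
        rw [Finset.sum_range_succ', hempty, fPolynomial, add_comm]
        simp only [Finset.card_singleton, Nat.cast_one, pow_zero, mul_one, add_left_inj]
        exact Finset.sum_congr rfl fun k hk ↦ by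
          rw [hs.fcount_eq_card ho (Finset.mem_range.1 hk)]
    _ = ∑ k ∈ Finset.range (n + 1),
          ∑ S ∈ boundaryFaces P.vertices (· - o) with S.card = k, X ^ S.card := by
        refine Finset.sum_congr rfl fun k _ ↦ ?_
        rw [Finset.sum_congr rfl fun S hS ↦ by rw [(Finset.mem_filter.1 hS).2],
          Finset.sum_const, nsmul_eq_mul]
    _ = ∑ S ∈ boundaryFaces P.vertices (· - o), X ^ S.card :=
        Finset.sum_fiberwise_of_maps_to hmaps _

theorem IsSimplicial.fPolynomial_comp (hs : P.IsSimplicial) :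
    P.fPolynomial.comp (-1 - X) = (-1) ^ n * P.fPolynomial := by
  obtain ⟨o, ho⟩ : (interior P.carrier).Nonempty := P.nonempty_int
  have hsum := (hs.isCompleteSimplicial ho).sum_neg_one_sub_pow_card (X : ℤ[X])
  rw [finrank_euclideanSpace_fin] at hsum
  simpa only [hs.fPolynomial_eq_sum ho, sum_comp, X_pow_comp] using hsum

end ConvexPolytope

/-- The Dehn–Sommerville relations for a `13`-dimensional simplicial convex polytope. -/
theorem dehn_sommerville_dim_thirteen (P : ConvexPolytope 13) (hs : P.IsSimplicial) :
    (P.fcount 6 : ℤ) = 8 * P.fcount 5 - 36 * P.fcount 4 + 120 * P.fcount 3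
        - 330 * P.fcount 2 + 792 * P.fcount 1 - 1716 * P.fcount 0 + 3432 ∧
      (P.fcount 7 : ℤ) = 27 * P.fcount 5 - 159 * P.fcount 4 + 585 * P.fcount 3
        - 1683 * P.fcount 2 + 4125 * P.fcount 1 - 9009 * P.fcount 0 + 18018 ∧
      (P.fcount 8 : ℤ) = 50 * P.fcount 5 - 325 * P.fcount 4 + 1252 * P.fcount 3
        - 3685 * P.fcount 2 + 9130 * P.fcount 1 - 20020 * P.fcount 0 + 40040 ∧
      (P.fcount 9 : ℤ) = 55 * P.fcount 5 - 374 * P.fcount 4 + 1474 * P.fcount 3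
        - 4389 * P.fcount 2 + 10934 * P.fcount 1 - 24024 * P.fcount 0 + 48048 ∧
      (P.fcount 10 : ℤ) = 36 * P.fcount 5 - 250 * P.fcount 4 + 996 * P.fcount 3
        - 2982 * P.fcount 2 + 7448 * P.fcount 1 - 16380 * P.fcount 0 + 32760 ∧
      (P.fcount 11 : ℤ) = 13 * P.fcount 5 - 91 * P.fcount 4 + 364 * P.fcount 3
        - 1092 * P.fcount 2 + 2730 * P.fcount 1 - 6006 * P.fcount 0 + 12012 ∧
      (P.fcount 12 : ℤ) = 2 * P.fcount 5 - 14 * P.fcount 4 + 56 * P.fcount 3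
        - 168 * P.fcount 2 + 420 * P.fcount 1 - 924 * P.fcount 0 + 1848 := by
  have hsymm (x : ℤ) : P.fPolynomial.eval (-1 - x) = -P.fPolynomial.eval x := by
    simpa using congrArg (Polynomial.eval x) hs.fPolynomial_comp
  simp only [P.eval_fPolynomial, Finset.sum_range_succ, Finset.sum_range_zero] at hsymm
  have h0 := hsymm 0
  have h1 := hsymm 1
  have h2 := hsymm 2
  have h3 := hsymm 3
  have h4 := hsymm 4
  have h5 := hsymm 5
  have h6 := hsymm 6
  norm_num at h0 h1 h2 h3 h4 h5 h6
  refine ⟨?_, ?_, ?_, ?_, ?_, ?_, ?_⟩ <;> linarith
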